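/- Let n ≥ 3, 1 ≤ k ≤ n, A diagonal in 𝒜_k (with λ_max(A) < 1/2 when k = 1), x₀ ∈ B_{1/2}(0)∖{0}, 0 < ε < 1/2, and c ≥ c*. Let u^ε be the unique k-convex solution of S_k(D²u) = 1 in ℝⁿ∖B̄_ε(x₀), u = 0 on ∂B_ε(x₀), lim_{|x|→∞}(u(x) − (½xᵀAx + c)) = 0, and let ũ^ε be its extension by 0 on B_ε(x₀). Then ũ^ε is k-convex in the generalized sense on all of ℝⁿ, i.e. ũ^ε ∈ Φ^k(ℝⁿ). -/

import Mathlib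

open scoped Classical Topology
open Real Filter MeasureTheory

noncomputable section

/-- Euclidean space ℝⁿ. -/
abbrev Euc (n : ℕ) : Type := EuclideanSpace ℝ (Fin n)

/-- The standard basis vector `e i`. -/
def ebasis (n : ℕ) (i : Fin n) : Euc n := EuclideanSpace.single i 1

/-- The Hessian matrix `D²u(x)`. -/
def hessMat (n : ℕ) (u : Euc n → ℝ) (x : Euc n) : Matrix (Fin n) (Fin n) ℝ :=
  Matrix.of fun i j => iteratedFDeriv ℝ 2 u x ![ebasis n i, ebasis n j]

/-- The Laplacian `Δu(x)` (trace of the Hessian). -/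
def lapl (n : ℕ) (u : Euc n → ℝ) (x : Euc n) : ℝ := ∑ i, hessMat n u x i i

/-- The `k`-th elementary symmetric function of the eigenvalues of an `n × n` matrix,
expressed through the coefficients of the characteristic polynomial. -/
def matSk (n k : ℕ) (M : Matrix (Fin n) (Fin n) ℝ) : ℝ :=
  (-1 : ℝ) ^ k * (Matrix.charpoly M).coeff (n - k)

/-- `S_k(D²u)(x)`. -/
def SkHess (n k : ℕ) (u : Euc n → ℝ) (x : Euc n) : ℝ := matSk n k (hessMat n u x)

/-- `u` is `k`-convex on `U`: the eigenvalues of the Hessian lie in the Gårding cone `Γ_k`. -/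
def KConvexOn (n k : ℕ) (u : Euc n → ℝ) (U : Set (Euc n)) : Prop :=
  ∀ x ∈ U, ∀ j : ℕ, 1 ≤ j → j ≤ k → 0 < matSk n j (hessMat n u x)

/-- Membership in the class `𝒜_k`: symmetric positive definite with `S_k(λ(A)) = 1`. -/
def MemA (n k : ℕ) (A : Matrix (Fin n) (Fin n) ℝ) : Prop :=
  A.IsSymm ∧ A.PosDef ∧ matSk n k A = 1

/-- The quadratic form `½ xᵀ A x`. -/
def quadA (n : ℕ) (A : Matrix (Fin n) (Fin n) ℝ) (x : Euc n) : ℝ :=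
  (1 / 2) * ∑ i, ∑ j, x i * A i j * x j

/-- The linear form `b ⋅ x`. -/
def linB (n : ℕ) (b x : Euc n) : ℝ := ∑ i, b i * x i

/-- `λ_max(A) < c`, expressed through the quadratic form (for symmetric `A`). -/
def lambdaMaxLT (n : ℕ) (A : Matrix (Fin n) (Fin n) ℝ) (c : ℝ) : Prop :=
  ∀ x : Euc n, x ≠ 0 → ∑ i, ∑ j, x i * A i j * x j < c * ‖x‖ ^ 2

/-- `u` is smooth on an open neighbourhood of the (closed) set `S`;
this is our rendering of `u ∈ C^∞(S)` for a closed set `S`. -/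
def SmoothOnNhd (n : ℕ) (u : Euc n → ℝ) (S : Set (Euc n)) : Prop :=
  ∃ U : Set (Euc n), IsOpen U ∧ S ⊆ U ∧ ContDiffOn ℝ (⊤ : ℕ∞) u U

/-- A smooth bounded strictly convex domain in ℝⁿ. -/
def SmoothStrictConvexDomain (n : ℕ) (Ω : Set (Euc n)) : Prop :=
  IsOpen Ω ∧ Bornology.IsBounded Ω ∧ Ω.Nonempty ∧ Convex ℝ Ω ∧ StrictConvex ℝ Ω ∧
    ∃ f : Euc n → ℝ, ContDiff ℝ (⊤ : ℕ∞) f ∧ Ω = {x | f x < 0} ∧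
      ∀ x ∈ frontier Ω, fderiv ℝ f x ≠ 0

/-- Extension of `u` by the constant value `v` inside `Ω`. -/
def extBy (n : ℕ) (Ω : Set (Euc n)) (v : ℝ) (u : Euc n → ℝ) : Euc n → ℝ :=
  fun x => if x ∈ Ω then v else u x

/-- `u` (vanishing on `∂Ω`) is quasiconvex: all sublevel sets of its zero-extension are convex. -/
def QuasiconvexSol (n : ℕ) (Ω : Set (Euc n)) (u : Euc n → ℝ) : Prop :=
  ∀ t : ℝ, Convex ℝ {x : Euc n | extBy n Ω 0 u x ≤ t}

/-- The `k`-th elementary symmetric polynomial of a vector `a ∈ ℝⁿ`. -/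
def esymmVec (n k : ℕ) (a : Fin n → ℝ) : ℝ :=
  ∑ s ∈ Finset.powersetCard k (Finset.univ : Finset (Fin n)), ∏ i ∈ s, a i

/-- `h_k(a) = max_i S_{k-1}(a)|_{a_i = 0} · a_i`. -/
def hkfun (n k : ℕ) (a : Fin n → ℝ) : ℝ :=
  ⨆ i : Fin n, esymmVec n (k - 1) (Function.update a i 0) * a i

/-- The exponent `-k / (2 h_k(a))`. -/
def genExp (n k : ℕ) (a : Fin n → ℝ) : ℝ := -(k : ℝ) / (2 * hkfun n k a)

/-- The integrand `(1 + α t^{-k/(2h_k(a))})^{1/k}`. -/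
def genInt (n k : ℕ) (a : Fin n → ℝ) (α t : ℝ) : ℝ :=
  (1 + α * t ^ genExp n k a) ^ ((1 : ℝ) / (k : ℝ))

/-- The generalized symmetric function `ū`. -/
def ubar (n k : ℕ) (a : Fin n → ℝ) (R₀ α : ℝ) (x : Euc n) : ℝ :=
  ∫ t in R₀..(quadA n (Matrix.diagonal a) x), genInt n k a α t

/-- `μ(α) = ∫_{R₀}^∞ ((1 + α t^{-k/(2h_k(a))})^{1/k} - 1) dt - R₀`. -/
def muA (n k : ℕ) (a : Fin n → ℝ) (R₀ α : ℝ) : ℝ :=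
  (∫ t in Set.Ioi R₀, (genInt n k a α t - 1)) - R₀

/-- The ellipsoid `E_R(xb) = {x : ½ (x - xb)ᵀ A (x - xb) < R}`. -/
def ESet (n : ℕ) (A : Matrix (Fin n) (Fin n) ℝ) (xb : Euc n) (R : ℝ) : Set (Euc n) :=
  {x : Euc n | quadA n A (x - xb) < R}

/-- The non-concentric convex ring `Ω_R^ε = E_R(0) ∖ B̄_ε(x₀)`. -/
def OmegaRe (n : ℕ) (a : Fin n → ℝ) (x₀ : Euc n) (ε R : ℝ) : Set (Euc n) :=
  ESet n (Matrix.diagonal a) 0 R \ closure (Metric.ball x₀ ε)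

/-- `u` is a `k`-convex solution of the approximating problem
`S_k(D²u) = 1` in `Ω_R^ε`, `u = 0` on `∂B_ε(x₀)`, `u = ū` on `∂E_R(0)`. -/
def ApproxSol (n k : ℕ) (a : Fin n → ℝ) (x₀ : Euc n) (ε R R₀ α : ℝ)
    (u : Euc n → ℝ) : Prop :=
  SmoothOnNhd n u (closure (OmegaRe n a x₀ ε R)) ∧
  KConvexOn n k u (OmegaRe n a x₀ ε R) ∧
  (∀ x ∈ OmegaRe n a x₀ ε R, SkHess n k u x = 1) ∧
  (∀ x ∈ Metric.sphere x₀ ε, u x = 0) ∧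
  (∀ x : Euc n, quadA n (Matrix.diagonal a) x = R → u x = ubar n k a R₀ α x)

/-- The constant `C_ε` of the boundary gradient estimate. -/
def Ceps (n k : ℕ) (C ε : ℝ) : ℝ :=
  if 2 * k < n then C * ((n : ℝ) / (k : ℝ) - 2) * ε⁻¹
  else if 2 * k = n then C * ε⁻¹ * |Real.log ε|⁻¹
  else C * (2 - (n : ℝ) / (k : ℝ)) * ε ^ (1 - (n : ℝ) / (k : ℝ))

/-- `u` is a `k`-convex solution of the exterior Dirichlet problem
`S_k(D²u) = 1` in `ℝⁿ ∖ B̄_ε(x₀)`, `u = 0` on `∂B_ε(x₀)`, with quadratic asymptotics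
`½ xᵀAx + c` at infinity (`A = diag a`). -/
def ExtBallSol (n k : ℕ) (a : Fin n → ℝ) (x₀ : Euc n) (ε c : ℝ) (u : Euc n → ℝ) : Prop :=
  SmoothOnNhd n u (Metric.ball x₀ ε)ᶜ ∧
  KConvexOn n k u (closure (Metric.ball x₀ ε))ᶜ ∧
  (∀ x ∈ (closure (Metric.ball x₀ ε))ᶜ, SkHess n k u x = 1) ∧
  (∀ x ∈ Metric.sphere x₀ ε, u x = 0) ∧
  Tendsto (fun x : Euc n => u x - (quadA n (Matrix.diagonal a) x + c))
    (cocompact (Euc n)) (𝓝 0)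

/-- `u` is a `k`-convex solution of the exterior Dirichlet problem on `ℝⁿ ∖ Ω₀` with
asymptotics `½ xᵀAx + b·x + c` at infinity. -/
def ExtDomSol (n k : ℕ) (Ω₀ : Set (Euc n)) (A : Matrix (Fin n) (Fin n) ℝ) (b : Euc n)
    (c : ℝ) (u : Euc n → ℝ) : Prop :=
  SmoothOnNhd n u Ω₀ᶜ ∧
  KConvexOn n k u (closure Ω₀)ᶜ ∧
  (∀ x ∈ (closure Ω₀)ᶜ, SkHess n k u x = 1) ∧
  (∀ x ∈ frontier Ω₀, u x = 0) ∧
  Tendsto (fun x : Euc n => u x - (quadA n A x + linB n b x + c))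
    (cocompact (Euc n)) (𝓝 0)

/-- `u` is a solution of the exterior Dirichlet problem for the Laplace equation
`Δu = 1` on `ℝⁿ ∖ Ω₀` with asymptotics `½ xᵀAx + b·x + c` at infinity. -/
def ExtDomSolLap (n : ℕ) (Ω₀ : Set (Euc n)) (A : Matrix (Fin n) (Fin n) ℝ) (b : Euc n)
    (c : ℝ) (u : Euc n → ℝ) : Prop :=
  SmoothOnNhd n u Ω₀ᶜ ∧
  (∀ x ∈ (closure Ω₀)ᶜ, lapl n u x = 1) ∧
  (∀ x ∈ frontier Ω₀, u x = 0) ∧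
  Tendsto (fun x : Euc n => u x - (quadA n A x + linB n b x + c))
    (cocompact (Euc n)) (𝓝 0)

/-- `u` solves the exterior problem `Δu = 0` in `ℝⁿ ∖ Ω̄`, `u = 1` on `∂Ω`,
`u → 0` at infinity. -/
def HarmExtSol (n : ℕ) (Ω : Set (Euc n)) (u : Euc n → ℝ) : Prop :=
  SmoothOnNhd n u Ωᶜ ∧
  (∀ x ∈ (closure Ω)ᶜ, lapl n u x = 0) ∧
  (∀ x ∈ frontier Ω, u x = 1) ∧
  Tendsto u (cocompact (Euc n)) (𝓝 0)

end

section helper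
open Polynomial

/-- generating polynomial of elementary symmetric functions -/
noncomputable def Epol {n : ℕ} (l : Fin n → ℝ) (s : Finset (Fin n)) : ℝ[X] :=
  ∏ i ∈ s, (1 + C (l i) * X)

/-- elementary symmetric functions over a finset -/
noncomputable def Ec {n : ℕ} (l : Fin n → ℝ) (s : Finset (Fin n)) (j : ℕ) : ℝ :=
  (Epol l s).coeff j

lemma Ec_zero {n : ℕ} (l : Fin n → ℝ) (s : Finset (Fin n)) : Ec l s 0 = 1 := by
  unfold Ec Epol
  rw [coeff_zero_eq_eval_zero, eval_prod]
  simp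

lemma Ec_insert {n : ℕ} (l : Fin n → ℝ) (s : Finset (Fin n)) (i : Fin n) (hi : i ∉ s) (j : ℕ) :
    Ec l (insert i s) (j+1) = Ec l s (j+1) + l i * Ec l s j := by
  unfold Ec Epol
  rw [Finset.prod_insert hi, add_mul, one_mul, coeff_add, mul_assoc, coeff_C_mul, coeff_X_mul]

lemma Ec_erase {n : ℕ} (l : Fin n → ℝ) (i : Fin n) (j : ℕ) :
    Ec l Finset.univ (j+1) = Ec l (Finset.univ.erase i) (j+1)
      + l i * Ec l (Finset.univ.erase i) j := by
  rw [← Ec_insert l _ i (by simp), Finset.insert_erase (by simp)]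

lemma Ec_nonneg {n : ℕ} (l : Fin n → ℝ) (hl : ∀ i, 0 ≤ l i) (s : Finset (Fin n)) :
    ∀ j, 0 ≤ Ec l s j := by
  classical
  induction s using Finset.induction_on with
  | empty =>
    intro j; simp only [Ec, Epol, Finset.prod_empty, coeff_one]; split_ifs <;> norm_num
  | insert i s hi ih =>
    intro j
    cases j with
    | zero => simp [Ec_zero]
    | succ j =>
      rw [Ec_insert l s i hi]
      have := mul_nonneg (hl i) (ih j)
      linarith [ih (j+1)]

lemma Ec_pos {n : ℕ} (l : Fin n → ℝ) (hl : ∀ i, 0 < l i) (s : Finset (Fin n)) :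
    ∀ j, j ≤ s.card → 0 < Ec l s j := by
  classical
  induction s using Finset.induction_on with
  | empty => intro j hj; simp at hj; subst hj; simp [Ec_zero]
  | insert i s hi ih =>
    intro j hj
    cases j with
    | zero => simp [Ec_zero]
    | succ j =>
      rw [Ec_insert l s i hi]
      rw [Finset.card_insert_of_notMem hi] at hj
      have := mul_pos (hl i) (ih j (by omega))
      linarith [Ec_nonneg l (fun i => (hl i).le) s (j+1)]

lemma Ec_smul {n : ℕ} (l : Fin n → ℝ) (g : ℝ) (s : Finset (Fin n)) :
    ∀ j, Ec (fun i => g * l i) s j = g ^ j * Ec l s j := by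
  classical
  induction s using Finset.induction_on with
  | empty =>
    intro j; simp only [Ec, Epol, Finset.prod_empty, coeff_one]; split_ifs with h <;> simp [h]
  | insert i s hi ih =>
    intro j
    cases j with
    | zero => simp [Ec_zero]
    | succ j =>
      rw [Ec_insert l s i hi, Ec_insert _ s i hi, ih, ih]; ring

/-- Laguerre inequality -/
lemma laguerre (p : ℝ[X]) (hp : p.Splits) (x : ℝ) :
    p.eval x * (derivative (derivative p)).eval x ≤ ((derivative p).eval x) ^ 2 := by
  have key : ∀ (m : Multiset ℝ) (q : ℝ[X]), q = (m.map (fun r => X - C r)).prod →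
      q.eval x * (derivative (derivative q)).eval x ≤ ((derivative q).eval x) ^ 2 := by
    intro m
    induction m using Multiset.induction_on with
    | empty => intro q hq; simp [hq]
    | cons r m ih =>
      intro q hq
      have h := ih _ rfl
      rw [Multiset.map_cons, Multiset.prod_cons] at hq
      set f := (m.map (fun r => X - C r)).prod with hf
      subst hq
      simp only [derivative_mul, derivative_sub, derivative_X, derivative_C, derivative_add,
        eval_mul, eval_add, eval_sub, eval_X, eval_C, sub_zero, one_mul]
      nlinarith [sq_nonneg (f.eval x), mul_le_mul_of_nonneg_left h (sq_nonneg (x - r))]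
  have h1 := hp.eq_prod_roots
  have h2 := key p.roots _ rfl
  rw [h1]
  simp only [derivative_C_mul, eval_mul, eval_C]
  nlinarith [mul_le_mul_of_nonneg_left h2 (sq_nonneg p.leadingCoeff)]

lemma splits_deriv (p : ℝ[X]) (hp : p.Splits) : (derivative p).Splits := by
  rw [splits_iff_card_roots] at hp ⊢
  have h1 := card_roots_le_derivative p
  have h2 := card_roots' (derivative p)
  have h3 := natDegree_derivative_le p
  omega

lemma splits_iter (p : ℝ[X]) (hp : p.Splits) (j : ℕ) : (derivative^[j] p).Splits := by
  induction j with
  | zero => simpa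
  | succ j ih => rw [Function.iterate_succ_apply']; exact splits_deriv _ ih

lemma coeff_newton (p : ℝ[X]) (hp : p.Splits) (j : ℕ) (h : 0 < p.coeff j)
    (h2 : 0 ≤ p.coeff (j+2)) :
    p.coeff j * p.coeff (j+2) ≤ p.coeff (j+1) ^ 2 := by
  have hL := laguerre _ (splits_iter p hp j) 0
  rw [← Function.iterate_succ_apply' derivative, ← Function.iterate_succ_apply' derivative] at hL
  simp only [← coeff_zero_eq_eval_zero, coeff_iterate_derivative, zero_add] at hL
  simp only [Nat.descFactorial_self, nsmul_eq_mul, Nat.succ_eq_add_one, Nat.factorial_succ] at hL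
  push_cast at hL
  have hf : (0:ℝ) < (j.factorial : ℝ) := by positivity
  have hL2 : (j.factorial:ℝ)^2 * ((j+1+1) * (j+1) * (p.coeff j * p.coeff (j+2)))
      ≤ (j.factorial:ℝ)^2 * ((j+1)^2 * p.coeff (j+1)^2) := by
    have e : j + 1 + 1 = j + 2 := rfl
    rw [e] at hL
    calc _ = _ := by ring
      _ ≤ _ := hL
      _ = _ := by ring
  have hL3 := le_of_mul_le_mul_left hL2 (by positivity)
  have hL4 : ((j:ℝ)+1) * ((j+2) * (p.coeff j * p.coeff (j+2)))
      ≤ ((j:ℝ)+1) * ((j+1) * p.coeff (j+1)^2) := by linarith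
  have hL5 := le_of_mul_le_mul_left hL4 (by positivity)
  have h0 := mul_nonneg h.le h2
  have hj : (0:ℝ) < (j:ℝ)+1 := by positivity
  nlinarith

lemma Epol_splits {n : ℕ} (l : Fin n → ℝ) (s : Finset (Fin n)) : (Epol l s).Splits := by
  unfold Epol
  apply Splits.prod
  intro i _
  apply Splits.of_natDegree_le_one
  compute_degree

lemma Ec_newton {n : ℕ} (l : Fin n → ℝ) (s : Finset (Fin n)) (j : ℕ) (h : 0 < Ec l s j)
    (h2 : 0 ≤ Ec l s (j+2)) : Ec l s j * Ec l s (j+2) ≤ Ec l s (j+1) ^ 2 :=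
  coeff_newton _ (Epol_splits l s) j h h2

lemma Ec_garding {n : ℕ} (l : Fin n → ℝ) (k : ℕ)
    (h : ∀ j, 1 ≤ j → j ≤ k → 0 < Ec l Finset.univ j) (i : Fin n) :
    ∀ j, j + 1 ≤ k → 0 < Ec l (Finset.univ.erase i) j := by
  intro j
  induction j with
  | zero => intro _; simp [Ec_zero]
  | succ j ih =>
    intro hj
    have e0 := ih (by omega)
    have a1 := h (j+1) (by omega) (by omega)
    have a2 := h (j+2) (by omega) (by omega)
    rw [Ec_erase l i] at a1 a2
    have e : j + 1 + 1 = j + 2 := rfl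
    rw [e] at *
    set x := Ec l (Finset.univ.erase i) j
    set y := Ec l (Finset.univ.erase i) (j+1)
    set z := Ec l (Finset.univ.erase i) (j+2)
    by_contra hy
    push Not at hy
    have hl : 0 < l i := by
      by_contra hc
      push Not at hc
      nlinarith
    have hz : 0 < z := by nlinarith
    have hN : x * z ≤ y ^ 2 := Ec_newton l _ j e0 hz.le
    nlinarith [mul_pos e0 a2]

lemma det_field {K : Type*} [Field K] {n : ℕ} (d u v : Fin n → K) (hd : ∀ i, d i ≠ 0) :
    (Matrix.diagonal d + Matrix.vecMulVec u v).det
      = ∏ i, d i + ∑ i, u i * v i * ∏ j ∈ Finset.univ.erase i, d j := by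
  have hdet : (Matrix.diagonal d).det = ∏ i, d i := Matrix.det_diagonal
  have hu : IsUnit (Matrix.diagonal d).det := by
    rw [hdet]; exact (Finset.prod_ne_zero_iff.mpr fun i _ => hd i).isUnit
  rw [Matrix.vecMulVec_eq Unit, Matrix.det_add_replicateCol_mul_replicateRow hu, hdet]
  have hinv : (Matrix.diagonal d)⁻¹ = Matrix.diagonal (fun i => (d i)⁻¹) := by
    apply Matrix.inv_eq_left_inv
    rw [Matrix.diagonal_mul_diagonal, ← Matrix.diagonal_one]
    congr 1; funext i; exact inv_mul_cancel₀ (hd i)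
  rw [hinv]
  simp only [Matrix.det_unique, Matrix.add_apply, Matrix.one_apply_eq, Matrix.mul_apply,
    Matrix.replicateRow_apply, Matrix.replicateCol_apply, Matrix.diagonal_apply]
  rw [mul_add, mul_one, Finset.mul_sum]
  congr 1
  apply Finset.sum_congr rfl
  intro i _
  rw [← Finset.mul_prod_erase Finset.univ d (Finset.mem_univ i)]
  simp
  field_simp [hd i]

lemma matSk_eq {n : ℕ} (k : ℕ) (hk : k ≤ n) (M : Matrix (Fin n) (Fin n) ℝ) :
    matSk n k M = (M.charpolyRev.comp (-X)).coeff k := by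
  unfold matSk
  have e : (-X : ℝ[X]) = C (-1) * X := by simp
  rw [e, comp_C_mul_X_coeff, ← Matrix.reverse_charpoly, coeff_reverse]
  rw [Matrix.charpoly_natDegree_eq_dim, Fintype.card_fin, revAt_le hk]
  ring

lemma Epol_comp {n : ℕ} (l : Fin n → ℝ) (s : Finset (Fin n)) :
    (∏ i ∈ s, (1 - X * C (l i)) : ℝ[X]).comp (-X) = Epol l s := by
  rw [prod_comp]; unfold Epol
  apply Finset.prod_congr rfl; intro i _
  simp

lemma charpolyRev_rank {n : ℕ} (l v : Fin n → ℝ) (τ : ℝ) :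
    (Matrix.diagonal l + τ • Matrix.vecMulVec v v).charpolyRev
     = ∏ i, (1 - X * C (l i)) - X * ∑ i, C (τ * v i ^ 2) *
        ∏ j ∈ Finset.univ.erase i, (1 - X * C (l j)) := by
  let K := FractionRing ℝ[X]
  have hinj : Function.Injective (algebraMap ℝ[X] K) := IsFractionRing.injective _ _
  apply hinj
  unfold Matrix.charpolyRev
  have hne : ∀ i, algebraMap ℝ[X] K (1 - X * C (l i)) ≠ 0 := by
    intro i h
    rw [map_eq_zero_iff _ hinj] at h
    have := congrArg (eval 0) h
    simp at this
  have h := det_field (fun i => algebraMap ℝ[X] K (1 - X * C (l i)))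
    (fun i => algebraMap ℝ[X] K (- X * C (τ * v i))) (fun i => algebraMap ℝ[X] K (C (v i))) hne
  rw [RingHom.map_det]
  have e : (algebraMap ℝ[X] K).mapMatrix (1 - (X : ℝ[X]) •
      (Matrix.diagonal l + τ • Matrix.vecMulVec v v).map C)
      = Matrix.diagonal (fun i => algebraMap ℝ[X] K (1 - X * C (l i))) +
        Matrix.vecMulVec (fun i => algebraMap ℝ[X] K (- X * C (τ * v i)))
          (fun i => algebraMap ℝ[X] K (C (v i))) := by
    ext i j
    simp only [RingHom.mapMatrix_apply, Matrix.map_apply, Matrix.add_apply, Matrix.sub_apply,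
      Matrix.smul_apply, Matrix.vecMulVec_apply, Matrix.diagonal_apply, Matrix.one_apply]
    rw [← map_mul]
    by_cases hij : i = j
    · subst hij; simp only [if_true]; rw [← map_add]; congr 1; simp; ring
    · simp only [if_neg hij]; rw [zero_add]; simp; ring
  rw [e, h]
  simp only [← map_prod, ← map_mul, ← map_sum, ← map_add]
  congr 1
  rw [sub_eq_add_neg, ← neg_mul, Finset.mul_sum]
  congr 1
  apply Finset.sum_congr rfl; intro i _
  simp; ring

lemma matSk_rank {n : ℕ} (l v : Fin n → ℝ) (τ : ℝ) (j : ℕ) (hj : j + 1 ≤ n) :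
    matSk n (j+1) (Matrix.diagonal l + τ • Matrix.vecMulVec v v)
     = Ec l Finset.univ (j+1) + τ * ∑ i, v i ^ 2 * Ec l (Finset.univ.erase i) j := by
  rw [matSk_eq _ hj, charpolyRev_rank, sub_comp, Epol_comp, mul_comp, X_comp]
  rw [neg_mul, sub_neg_eq_add, coeff_add, coeff_X_mul, Polynomial.sum_comp,
    finsetSum_coeff, Finset.mul_sum]
  congr 1
  apply Finset.sum_congr rfl; intro i _
  rw [mul_comp, C_comp, Epol_comp, coeff_C_mul]
  unfold Ec; ring

lemma matSk_diag {n : ℕ} (l : Fin n → ℝ) (j : ℕ) (hj : j ≤ n) :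
    matSk n j (Matrix.diagonal l) = Ec l Finset.univ j := by
  have := charpolyRev_rank l (fun _ => 0) 0
  rw [matSk_eq _ hj]
  simp only [zero_smul, add_zero, zero_mul, map_zero, Finset.sum_const_zero, mul_zero,
    sub_zero] at this
  rw [this, Epol_comp]; rfl

/-- conjugation -/
lemma exists_diag {n : ℕ} (W : Matrix (Fin n) (Fin n) ℝ) (hW : W.IsSymm) :
    ∃ (Q : Matrix (Fin n) (Fin n) ℝ) (l : Fin n → ℝ), Q * Q.transpose = 1 ∧ Q.transpose * Q = 1 ∧
      W = Q * Matrix.diagonal l * Q.transpose ∧ (W.PosSemidef → ∀ i, 0 ≤ l i) := by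
  have hH : W.IsHermitian := by
    rw [Matrix.IsHermitian, Matrix.conjTranspose_eq_transpose_of_trivial]; exact hW
  refine ⟨hH.eigenvectorUnitary, hH.eigenvalues, ?_, ?_, ?_, ?_⟩
  · have := (Matrix.mem_unitaryGroup_iff).1 hH.eigenvectorUnitary.2
    rwa [Matrix.star_eq_conjTranspose, Matrix.conjTranspose_eq_transpose_of_trivial] at this
  · have := (Matrix.mem_unitaryGroup_iff').1 hH.eigenvectorUnitary.2
    rwa [Matrix.star_eq_conjTranspose, Matrix.conjTranspose_eq_transpose_of_trivial] at this
  · have := hH.spectral_theorem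
    rw [Unitary.conjStarAlgAut_apply] at this
    rw [Matrix.star_eq_conjTranspose, Matrix.conjTranspose_eq_transpose_of_trivial] at this
    exact this
  · intro h; exact h.eigenvalues_nonneg

lemma matSk_conj {n : ℕ} (j : ℕ) (Q D : Matrix (Fin n) (Fin n) ℝ)
    (h2 : Q.transpose * Q = 1) : matSk n j (Q * D * Q.transpose) = matSk n j D := by
  unfold matSk
  rw [Matrix.charpoly_mul_comm, ← Matrix.mul_assoc, h2, one_mul]

lemma matSk_nonneg_of_psd {n : ℕ} (k : ℕ) (hk : k ≤ n) (M : Matrix (Fin n) (Fin n) ℝ)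
    (hM : M.PosSemidef) : 0 ≤ matSk n k M := by
  have hs : M.IsSymm := by
    have := hM.1
    rwa [Matrix.IsHermitian, Matrix.conjTranspose_eq_transpose_of_trivial] at this
  obtain ⟨Q, l, h1, h2, h3, h4⟩ := exists_diag M hs
  rw [h3, matSk_conj _ _ _ h2, matSk_diag _ _ hk]
  exact Ec_nonneg l (h4 hM) _ _

lemma mono_rank {n : ℕ} (k : ℕ) (hk : k ≤ n) (W : Matrix (Fin n) (Fin n) ℝ) (hW : W.IsSymm)
    (h : ∀ j, 1 ≤ j → j ≤ k → 0 < matSk n j W) (v : Fin n → ℝ) :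
    ∀ j, 1 ≤ j → j ≤ k → matSk n j W ≤ matSk n j (W + Matrix.vecMulVec v v) := by
  obtain ⟨Q, l, h1, h2, h3, -⟩ := exists_diag W hW
  have hv : Matrix.vecMulVec v v
      = Q * Matrix.vecMulVec (Q.transpose.mulVec v) (Q.transpose.mulVec v) * Q.transpose := by
    rw [Matrix.mul_vecMulVec, Matrix.vecMulVec_mul, Matrix.mulVec_mulVec, h1, Matrix.one_mulVec,
      Matrix.vecMul_transpose, Matrix.mulVec_mulVec, h1, Matrix.one_mulVec]
  have hG : ∀ j, 1 ≤ j → j ≤ k → 0 < Ec l Finset.univ j := by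
    intro j hj hj'
    have := h j hj hj'
    rwa [h3, matSk_conj _ _ _ h2, matSk_diag _ _ (by omega)] at this
  intro j hj hj'
  rw [hv, h3, ← Matrix.add_mul, ← Matrix.mul_add, matSk_conj _ _ _ h2, matSk_conj _ _ _ h2,
    matSk_diag _ _ (by omega)]
  obtain ⟨j, rfl⟩ : ∃ i, j = i + 1 := ⟨j - 1, by omega⟩
  have := matSk_rank l (Q.transpose.mulVec v) 1 j (by omega)
  rw [one_smul] at this
  rw [this]
  have : 0 ≤ ∑ i, (Q.transpose.mulVec v) i ^ 2 * Ec l (Finset.univ.erase i) j :=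
    Finset.sum_nonneg fun i _ => mul_nonneg (sq_nonneg _) (Ec_garding l k hG i j (by omega)).le
  linarith

lemma mono_psd {n : ℕ} (k : ℕ) (hk1 : 1 ≤ k) (hk : k ≤ n) (W : Matrix (Fin n) (Fin n) ℝ)
    (hW : W.IsSymm)
    (h : ∀ j, 1 ≤ j → j ≤ k → 0 < matSk n j W) (P : Matrix (Fin n) (Fin n) ℝ)
    (hP : P.PosSemidef) : matSk n k W ≤ matSk n k (W + P) := by
  obtain ⟨m, v, hv⟩ := Matrix.posSemidef_iff_eq_sum_vecMulVec.mp hP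
  have key : ∀ s : Finset (Fin m), (W + ∑ i ∈ s, Matrix.vecMulVec (v i) (v i)).IsSymm ∧
      ∀ j, 1 ≤ j → j ≤ k → matSk n j W ≤ matSk n j (W + ∑ i ∈ s, Matrix.vecMulVec (v i) (v i)) := by
    intro s
    induction s using Finset.induction_on with
    | empty => simpa using hW
    | insert i s hi ih =>
      have e : W + ∑ i ∈ insert i s, Matrix.vecMulVec (v i) (v i)
        = (W + ∑ i ∈ s, Matrix.vecMulVec (v i) (v i)) + Matrix.vecMulVec (v i) (v i) := by
        rw [Finset.sum_insert hi]; abel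
      rw [e]
      refine ⟨?_, ?_⟩
      · apply ih.1.add
        rw [Matrix.IsSymm, Matrix.transpose_vecMulVec]
      · intro j hj hj'
        refine (ih.2 j hj hj').trans (mono_rank k hk _ ih.1 ?_ (v i) j hj hj')
        intro j hj hj'
        exact (h j hj hj').trans_le (ih.2 j hj hj')
  have := (key Finset.univ).2 k hk1 le_rfl
  rw [hv]
  simpa using this

end helper

section helper2

lemma second_deriv_nonneg (φ φ' : ℝ → ℝ) (b : ℝ) (h1 : ∀ᶠ t in 𝓝 (0:ℝ), HasDerivAt φ (φ' t) t)
    (h2 : HasDerivAt φ' b 0) (hm : IsLocalMin φ 0) : 0 ≤ b := by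
  by_contra hb
  push Not at hb
  have e1 : deriv φ =ᶠ[𝓝 0] φ' := h1.mono fun t ht => ht.deriv
  have e2 : deriv (deriv φ) 0 = b := by rw [e1.deriv_eq]; exact h2.deriv
  have e3 : IsLocalMax φ 0 :=
    isLocalMax_of_deriv_deriv_neg (by rw [e2]; exact hb) hm.deriv_eq_zero
      h1.self_of_nhds.continuousAt
  have e4 : φ =ᶠ[𝓝 0] fun _ => φ 0 := by
    filter_upwards [hm, e3] with t h h'
    exact le_antisymm h' h
  have e5 : deriv φ =ᶠ[𝓝 0] fun _ => 0 := by
    have := e4.deriv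
    simpa using this
  have e6 : deriv (deriv φ) 0 = 0 := by rw [e5.deriv_eq]; simp
  linarith

/-- second order expansion along lines -/
def LineHess (n : ℕ) (f : Euc n → ℝ) (z : Euc n) (W : Matrix (Fin n) (Fin n) ℝ) : Prop :=
  ∀ v : Euc n, ∃ φ' : ℝ → ℝ,
    (∀ᶠ t in 𝓝 (0:ℝ), HasDerivAt (fun t => f (z + t • v)) (φ' t) t) ∧
    HasDerivAt φ' (∑ i, ∑ j, v i * W i j * v j) 0

lemma touch {n : ℕ} {f g : Euc n → ℝ} {z : Euc n} {W V : Matrix (Fin n) (Fin n) ℝ}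
    (hf : LineHess n f z W) (hg : LineHess n g z V) (hW : W.IsSymm) (hV : V.IsSymm)
    (hm : IsLocalMin (fun x => f x - g x) z) : (W - V).PosSemidef := by
  rw [Matrix.posSemidef_iff_dotProduct_mulVec]
  refine ⟨?_, ?_⟩
  · rw [Matrix.IsHermitian, Matrix.conjTranspose_eq_transpose_of_trivial]; exact hW.sub hV
  intro v
  let w : Euc n := WithLp.toLp 2 v
  obtain ⟨p, hp1, hp2⟩ := hf w
  obtain ⟨q, hq1, hq2⟩ := hg w
  have hc : Tendsto (fun t : ℝ => z + t • w) (𝓝 0) (𝓝 z) := by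
    have : Continuous (fun t : ℝ => z + t • w) := by fun_prop
    simpa using this.tendsto 0
  have := second_deriv_nonneg (fun t => f (z + t • w) - g (z + t • w)) (fun t => p t - q t) _
    (by filter_upwards [hp1, hq1] with t h h' using h.sub h') (hp2.sub hq2)
    (by
      have := hc.eventually hm
      filter_upwards [this] with t ht
      simpa using ht)
  have e : star v ⬝ᵥ (W - V).mulVec v = (∑ i, ∑ j, w i * W i j * w j)
      - ∑ i, ∑ j, w i * V i j * w j := by
    simp only [dotProduct, Matrix.mulVec, Matrix.sub_apply, Finset.mul_sum, ← Finset.sum_sub_distrib]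
    apply Finset.sum_congr rfl; intro i _
    apply Finset.sum_congr rfl; intro j _
    simp [w]; ring
  rw [e]; exact this

lemma euc_sum {n : ℕ} (v : Euc n) : v = ∑ i, v i • ebasis n i := by
  ext j
  simp [ebasis, Finset.sum_apply, Pi.single_apply]

lemma lineHess_smooth {n : ℕ} {u : Euc n → ℝ} {z : Euc n} (hu : ContDiffAt ℝ 2 u z) :
    LineHess n u z (hessMat n u z) := by
  intro v
  have hl : ∀ t : ℝ, HasDerivAt (fun t : ℝ => z + t • v) v t := by
    intro t
    simpa using ((hasDerivAt_id t).smul_const v).const_add z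
  refine ⟨fun t => fderiv ℝ u (z + t • v) v, ?_, ?_⟩
  · have h1 : ∀ᶠ x in 𝓝 z, DifferentiableAt ℝ u x := by
      have := hu.eventually (by simp)
      exact this.mono fun x hx => hx.differentiableAt (by simp)
    have hc : Tendsto (fun t : ℝ => z + t • v) (𝓝 0) (𝓝 z) := by
      have : Continuous (fun t : ℝ => z + t • v) := by fun_prop
      simpa using this.tendsto 0
    filter_upwards [hc.eventually h1] with t ht
    exact ht.hasFDerivAt.comp_hasDerivAt t (hl t)
  · have h2 : DifferentiableAt ℝ (fderiv ℝ u) z :=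
      (hu.fderiv_right (m := 1) (by norm_num)).differentiableAt (by simp)
    have h3 : HasFDerivAt (fderiv ℝ u) (fderiv ℝ (fderiv ℝ u) z) (z + (0:ℝ) • v) := by
      simpa using h2.hasFDerivAt
    have h4a : HasDerivAt (fun t : ℝ => fderiv ℝ u (z + t • v))
        (fderiv ℝ (fderiv ℝ u) z v) 0 := h3.comp_hasDerivAt (0:ℝ) (hl 0)
    have h4 : HasDerivAt (fun t : ℝ => fderiv ℝ u (z + t • v) v)
        (fderiv ℝ (fderiv ℝ u) z v v) 0 :=
      (ContinuousLinearMap.apply ℝ ℝ v).hasFDerivAt.comp_hasDerivAt (0:ℝ) h4a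
    have e : ∑ i, ∑ j, v i * hessMat n u z i j * v j = fderiv ℝ (fderiv ℝ u) z v v := by
      conv_rhs => rw [euc_sum v]
      simp only [map_sum, map_smul, hessMat, Matrix.of_apply, iteratedFDeriv_two_apply,
        _root_.sum_apply, _root_.smul_apply, smul_eq_mul, Finset.mul_sum,
        Matrix.cons_val_zero, Matrix.cons_val_one]
      rw [Finset.sum_comm]
      apply Finset.sum_congr rfl; intro i _
      apply Finset.sum_congr rfl; intro j _
      ring
    rw [e]
    exact h4

lemma hess_symm {n : ℕ} {u : Euc n → ℝ} {z : Euc n} (hu : ContDiffAt ℝ 2 u z) :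
    (hessMat n u z).IsSymm := by
  have := hu.isSymmSndFDerivAt (by simp)
  ext i j
  simp only [Matrix.transpose_apply, hessMat, Matrix.of_apply, iteratedFDeriv_two_apply]
  exact this _ _

lemma lineHess_zero {n : ℕ} (z : Euc n) : LineHess n (fun _ => 0) z 0 := by
  intro v
  refine ⟨fun _ => 0, Eventually.of_forall fun t => hasDerivAt_const _ _, ?_⟩
  simpa using hasDerivAt_const (0:ℝ) (0:ℝ)

/-- bilinear symmetrised form -/
noncomputable def bilA (n : ℕ) (M : Matrix (Fin n) (Fin n) ℝ) (x v : Euc n) : ℝ :=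
  (1 / 2) * ∑ i, ∑ j, (x i * M i j * v j + v i * M i j * x j)

lemma quadA_line {n : ℕ} (M : Matrix (Fin n) (Fin n) ℝ) (x v : Euc n) (t : ℝ) :
    quadA n M (x + t • v) = quadA n M x + t * bilA n M x v + t ^ 2 * quadA n M v := by
  unfold quadA bilA
  simp only [Finset.mul_sum, ← Finset.sum_add_distrib]
  apply Finset.sum_congr rfl; intro i _
  apply Finset.sum_congr rfl; intro j _
  simp; ring

lemma quadA_line_deriv {n : ℕ} (M : Matrix (Fin n) (Fin n) ℝ) (x v : Euc n) (t : ℝ) :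
    HasDerivAt (fun t : ℝ => quadA n M (x + t • v)) (bilA n M x v + 2 * t * quadA n M v) t := by
  simp only [quadA_line]
  have h := (((hasDerivAt_id t).mul_const (bilA n M x v)).const_add (quadA n M x)).add
    (((hasDerivAt_id t).pow 2).mul_const (quadA n M v))
  convert! h using 1
  simp

lemma lineHess_poly {n : ℕ} (M : Matrix (Fin n) (Fin n) ℝ) (p z : Euc n) (r : ℝ) :
    LineHess n (fun x => quadA n M x + linB n p x + r) z M := by
  intro v
  refine ⟨fun t => bilA n M z v + 2 * t * quadA n M v + linB n p v,
    Eventually.of_forall fun t => ?_, ?_⟩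
  · apply HasDerivAt.add_const
    apply (quadA_line_deriv M z v t).add
    have e : (fun t : ℝ => linB n p (z + t • v)) = fun t => linB n p z + t * linB n p v := by
      funext t
      unfold linB
      rw [Finset.mul_sum, ← Finset.sum_add_distrib]
      apply Finset.sum_congr rfl; intro i _
      simp; ring
    rw [e]
    simpa using ((hasDerivAt_id t).mul_const (linB n p v)).const_add (linB n p z)
  · have h : HasDerivAt (fun t : ℝ => bilA n M z v + 2 * t * quadA n M v + linB n p v)
        (2 * quadA n M v) 0 := by
      have := ((((hasDerivAt_id (0:ℝ)).const_mul 2).mul_const (quadA n M v)).const_add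
        (bilA n M z v)).add_const (linB n p v)
      simpa using this
    convert! h using 1
    unfold quadA; ring

lemma lineHess_ball {n : ℕ} (x₀ z : Euc n) (C ε : ℝ) :
    LineHess n (fun x => C * (‖x - x₀‖ ^ 2 - ε ^ 2)) z (Matrix.diagonal fun _ => 2 * C) := by
  intro v
  refine ⟨fun t => C * (2 * inner ℝ (z - x₀) v + 2 * t * ‖v‖ ^ 2),
    Eventually.of_forall fun t => ?_, ?_⟩
  · have e : (fun t : ℝ => C * (‖z + t • v - x₀‖ ^ 2 - ε ^ 2)) = fun t =>
        C * ((‖z - x₀‖ ^ 2 - ε ^ 2) + (t * (2 * inner ℝ (z - x₀) v) + t ^ 2 * ‖v‖ ^ 2)) := by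
      funext t
      have : z + t • v - x₀ = (z - x₀) + t • v := by abel
      rw [this, norm_add_sq_real, inner_smul_right, norm_smul, mul_pow, Real.norm_eq_abs, sq_abs]
      ring
    simp only [e]
    have h := ((((hasDerivAt_id t).mul_const (2 * inner ℝ (z - x₀) v)).add
      (((hasDerivAt_id t).pow 2).mul_const (‖v‖ ^ 2))).const_add (‖z - x₀‖ ^ 2 - ε ^ 2)).const_mul C
    convert! h using 1
    simp
  · have h : HasDerivAt (fun t : ℝ => C * (2 * inner ℝ (z - x₀) v + 2 * t * ‖v‖ ^ 2))
        (C * (2 * ‖v‖ ^ 2)) 0 := by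
      have := ((((hasDerivAt_id (0:ℝ)).const_mul 2).mul_const (‖v‖ ^ 2)).const_add
        (2 * inner ℝ (z - x₀) v)).const_mul C
      simpa using this
    convert! h using 1
    rw [EuclideanSpace.norm_sq_eq]
    simp only [Matrix.diagonal_apply, Real.norm_eq_abs, sq_abs]
    simp only [mul_ite, ite_mul, mul_zero, zero_mul, Finset.sum_ite_eq, Finset.mem_univ, if_true,
      Finset.mul_sum]
    apply Finset.sum_congr rfl; intro i _; ring

lemma lineHess_G {n : ℕ} (a : Fin n → ℝ) (z : Euc n) (G f : ℝ → ℝ) (f' : ℝ)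
    (hG : ∀ᶠ s in 𝓝 (quadA n (Matrix.diagonal a) z), HasDerivAt G (f s) s)
    (hf : HasDerivAt f f' (quadA n (Matrix.diagonal a) z)) :
    LineHess n (fun x => G (quadA n (Matrix.diagonal a) x)) z
      (Matrix.diagonal (fun i => f (quadA n (Matrix.diagonal a) z) * a i)
        + f' • Matrix.vecMulVec (fun i => a i * z i) (fun i => a i * z i)) := by
  intro v
  set A := Matrix.diagonal a
  refine ⟨fun t => f (quadA n A (z + t • v)) * (bilA n A z v + 2 * t * quadA n A v), ?_, ?_⟩
  · have hc : Tendsto (fun t : ℝ => quadA n A (z + t • v)) (𝓝 0) (𝓝 (quadA n A z)) := by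
      have := (quadA_line_deriv A z v 0).continuousAt.tendsto
      simpa using this
    filter_upwards [hc.eventually hG] with t ht
    exact ht.comp t (quadA_line_deriv A z v t)
  · have h0 : HasDerivAt f f' (quadA n A (z + (0:ℝ) • v)) := by simpa using hf
    have h1 := h0.comp (0:ℝ) (quadA_line_deriv A z v 0)
    have h2 : HasDerivAt (fun t : ℝ => bilA n A z v + 2 * t * quadA n A v) (2 * quadA n A v) 0 := by
      have := (((hasDerivAt_id (0:ℝ)).const_mul 2).mul_const (quadA n A v)).const_add (bilA n A z v)
      simpa using this
    have h3 := h1.mul h2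
    convert! h3 using 1
    have eb : bilA n A z v = ∑ i, a i * z i * v i := by
      unfold bilA
      simp only [A, Matrix.diagonal_apply]
      simp only [mul_ite, ite_mul, mul_zero, zero_mul, Finset.sum_ite_eq, Finset.mem_univ, if_true,
        Finset.sum_add_distrib]
      rw [← Finset.sum_add_distrib, Finset.mul_sum]
      apply Finset.sum_congr rfl; intro i _; ring
    have eq : quadA n A v = (1/2) * ∑ i, v i * a i * v i := by
      unfold quadA
      simp only [A, Matrix.diagonal_apply]
      simp only [mul_ite, ite_mul, mul_zero, zero_mul, Finset.sum_ite_eq, Finset.mem_univ, if_true]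
    simp only [Function.comp, zero_smul, add_zero, mul_zero, zero_mul]
    have e1 : ∑ i, ∑ j, v i * (Matrix.diagonal (fun i => f (quadA n A z) * a i)
        + f' • Matrix.vecMulVec (fun i => a i * z i) (fun i => a i * z i)) i j * v j
        = f (quadA n A z) * (∑ i, v i * a i * v i)
          + f' * ((∑ i, a i * z i * v i) * (∑ i, a i * z i * v i)) := by
      rw [Finset.sum_mul_sum, Finset.mul_sum, Finset.mul_sum, ← Finset.sum_add_distrib]
      apply Finset.sum_congr rfl; intro i _
      simp only [Matrix.add_apply, Matrix.smul_apply, Matrix.vecMulVec_apply, mul_add, add_mul,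
        Finset.sum_add_distrib, Matrix.diagonal_apply, mul_ite, ite_mul, mul_zero, zero_mul,
        Finset.sum_ite_eq, Finset.mem_univ, if_true, Finset.mul_sum, smul_eq_mul]
      congr 1
      · ring
      · apply Finset.sum_congr rfl; intro j _; ring
    rw [e1, eb, eq]; ring

end helper2

section helper3

lemma choose_m {n k : ℕ} (hn : 3 ≤ n) (hk1 : 1 ≤ k) (a : Fin n → ℝ)
    (ha : ∀ i, 0 < a i) (hS : Ec a Finset.univ k = 1) (h1 : k = 1 → ∀ i, a i < 1 / 2)
    (hkn : k ≤ n) :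
    ∃ m : ℝ, 1 < m ∧ ∀ (i : Fin n) (j : ℕ), j + 1 ≤ k →
      2 * m * (a i * Ec a (Finset.univ.erase i) j) < k * Ec a Finset.univ (j+1) := by
  have key : ∀ (i : Fin n) (j : Fin k),
      2 * 1 * (a i * Ec a (Finset.univ.erase i) j) < k * Ec a Finset.univ (j+1) := by
    intro i j
    have hj := j.2
    have hcard : (Finset.univ.erase i).card = n - 1 := by simp
    have p1 : 0 < a i * Ec a (Finset.univ.erase i) j :=
      mul_pos (ha i) (Ec_pos a ha _ _ (by omega))
    have p2 : 0 ≤ Ec a (Finset.univ.erase i) (j+1) := Ec_nonneg a (fun i => (ha i).le) _ _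
    rcases Nat.lt_or_ge k 3 with hk | hk
    · obtain rfl | rfl : k = 1 ∨ k = 2 := by omega
      · have : (j : ℕ) = 0 := by omega
        rw [this] at p1 ⊢
        rw [zero_add, hS, Ec_zero]
        have := h1 rfl i
        push_cast; linarith
      · have p3 : 0 < Ec a (Finset.univ.erase i) (j+1) := Ec_pos a ha _ _ (by omega)
        rw [Ec_erase a i]
        push_cast; linarith
    · have hk' : (3:ℝ) ≤ k := by exact_mod_cast hk
      rw [Ec_erase a i]
      nlinarith
  have ev : ∀ᶠ m in 𝓝[>] (1:ℝ), ∀ (i : Fin n) (j : Fin k),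
      2 * m * (a i * Ec a (Finset.univ.erase i) j) < k * Ec a Finset.univ (j+1) := by
    refine Filter.Eventually.filter_mono nhdsWithin_le_nhds ?_
    rw [Filter.eventually_all]; intro i
    rw [Filter.eventually_all]; intro j
    have hc : Continuous (fun m : ℝ => 2 * m * (a i * Ec a (Finset.univ.erase i) j)) := by fun_prop
    exact hc.continuousAt.eventually_lt continuousAt_const (key i j)
  obtain ⟨m, hm, hm1⟩ := (ev.and self_mem_nhdsWithin).exists
  exact ⟨m, hm1, fun i j hj => hm i ⟨j, by omega⟩⟩

lemma quadA_diag {n : ℕ} (a : Fin n → ℝ) (v : Euc n) :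
    quadA n (Matrix.diagonal a) v = (1/2) * ∑ i, a i * v i ^ 2 := by
  unfold quadA
  simp only [Matrix.diagonal_apply]
  simp only [mul_ite, ite_mul, mul_zero, zero_mul, Finset.sum_ite_eq, Finset.mem_univ, if_true]
  congr 1
  apply Finset.sum_congr rfl; intro i _; ring

lemma barrier_alg {n k : ℕ} (hk1 : 1 ≤ k) (hkn : k ≤ n) (a : Fin n → ℝ)
    (ha : ∀ i, 0 < a i) (hS : Ec a Finset.univ k = 1) (m : ℝ) (hm : 1 < m)
    (hmm : ∀ (i : Fin n) (j : ℕ), j + 1 ≤ k →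
      2 * m * (a i * Ec a (Finset.univ.erase i) j) < k * Ec a Finset.univ (j+1))
    (x : Euc n) (f f' β : ℝ) (hs : 0 < quadA n (Matrix.diagonal a) x) (hf : 0 < f) (hf' : f' < 0)
    (hβ : 0 < β)
    (hrel : k * (f' * quadA n (Matrix.diagonal a) x * (1 + β)) = - (m * f * β))
    (hfk : f ^ k = 1 + β) :
    (∀ j, 1 ≤ j → j ≤ k → 0 < matSk n j (Matrix.diagonal (fun i => f * a i)
        + f' • Matrix.vecMulVec (fun i => a i * x i) (fun i => a i * x i))) ∧
    1 < matSk n k (Matrix.diagonal (fun i => f * a i)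
        + f' • Matrix.vecMulVec (fun i => a i * x i) (fun i => a i * x i)) := by
  set W := Matrix.diagonal (fun i => f * a i)
        + f' • Matrix.vecMulVec (fun i => a i * x i) (fun i => a i * x i) with hW
  set s := quadA n (Matrix.diagonal a) x with hsdef
  have hss : ∑ i, a i * x i ^ 2 = 2 * s := by rw [hsdef, quadA_diag]; ring
  have key : ∀ j, j + 1 ≤ k → ∃ Y, matSk n (j+1) W = f ^ j * Y ∧
      f * Ec a Finset.univ (j+1) < (1 + β) * Y := by
    intro j hj
    set E := Ec a Finset.univ (j+1) with hE
    set S := ∑ i, a i * x i ^ 2 * (a i * Ec a (Finset.univ.erase i) j) with hSd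
    refine ⟨f * E + f' * S, ?_, ?_⟩
    · rw [hW, matSk_rank _ _ _ _ (by omega)]
      simp only [Ec_smul]
      rw [mul_add, hSd, Finset.mul_sum, Finset.mul_sum, Finset.mul_sum]
      congr 1
      · rw [hE]; ring
      · apply Finset.sum_congr rfl; intro i _; ring
    · have h1 : m * S < k * E * s := by
        have : 0 < ∑ i, a i * x i ^ 2 * (k * E - 2 * m * (a i * Ec a (Finset.univ.erase i) j)) := by
          have hnn : ∀ i ∈ Finset.univ, 0 ≤ a i * x i ^ 2 *
              (k * E - 2 * m * (a i * Ec a (Finset.univ.erase i) j)) := by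
            intro i _
            have := hmm i j hj
            exact mul_nonneg (mul_nonneg (ha i).le (sq_nonneg _)) (by linarith)
          apply Finset.sum_pos' hnn
          by_contra hcon
          push Not at hcon
          have : ∑ i, a i * x i ^ 2 = 0 := by
            apply Finset.sum_eq_zero
            intro i hi
            have h2 := hcon i hi
            have h3 := hmm i j hj
            have h4 : 0 ≤ a i * x i ^ 2 := mul_nonneg (ha i).le (sq_nonneg _)
            by_contra hne
            have h5 : 0 < a i * x i ^ 2 := lt_of_le_of_ne h4 (Ne.symm hne)
            have := mul_pos h5 (show 0 < k * E - 2 * m * (a i * Ec a (Finset.univ.erase i) j) by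
              linarith)
            linarith
          rw [hss] at this; linarith
        have e : ∑ i, a i * x i ^ 2 * (k * E - 2 * m * (a i * Ec a (Finset.univ.erase i) j))
            = k * E * (∑ i, a i * x i ^ 2) - 2 * m * S := by
          rw [hSd, Finset.mul_sum, Finset.mul_sum, ← Finset.sum_sub_distrib]
          apply Finset.sum_congr rfl; intro i _; ring
        rw [e, hss] at this
        linarith
      have h2 : f' * (k * E * s) < f' * (m * S) := mul_lt_mul_of_neg_left h1 hf'
      have h3 : (1 + β) * (f' * (k * E * s)) < (1 + β) * (f' * (m * S)) :=
        mul_lt_mul_of_pos_left h2 (by linarith)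
      have h4 : (1 + β) * (f' * (k * E * s)) = E * (-(m * f * β)) := by rw [← hrel]; ring
      rw [h4] at h3
      have h5 : m * (E * (-(f * β))) < m * ((1 + β) * (f' * S)) := by
        calc _ = E * (-(m * f * β)) := by ring
          _ < _ := h3
          _ = _ := by ring
      have h6 := lt_of_mul_lt_mul_left h5 (by linarith)
      nlinarith
  refine ⟨?_, ?_⟩
  · intro j hj hjk
    obtain ⟨j, rfl⟩ : ∃ i, j = i + 1 := ⟨j - 1, by omega⟩
    obtain ⟨Y, hY, hY2⟩ := key j hjk
    rw [hY]
    have hE : 0 < Ec a Finset.univ (j+1) := Ec_pos a ha _ _ (by simp; omega)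
    have : 0 < (1 + β) * Y := (mul_pos hf hE).trans hY2
    exact mul_pos (pow_pos hf _) (pos_of_mul_pos_right this (by linarith))
  · obtain ⟨j, rfl⟩ : ∃ i, k = i + 1 := ⟨k - 1, by omega⟩
    obtain ⟨Y, hY, hY2⟩ := key j le_rfl
    rw [hY]
    rw [hS, mul_one] at hY2
    have h1 : f ^ j * f < f ^ j * ((1 + β) * Y) := mul_lt_mul_of_pos_left hY2 (pow_pos hf _)
    rw [← pow_succ, hfk] at h1
    have h2 : (1 + β) * 1 < (1 + β) * (f ^ j * Y) := by
      calc _ = 1 + β := by ring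
        _ < _ := h1
        _ = _ := by ring
    exact lt_of_mul_lt_mul_left h2 (by linarith)

/-- the slope of the barrier -/
noncomputable def fbar (k : ℕ) (m α s : ℝ) : ℝ := (1 + α * s ^ (-m)) ^ (1 / (k:ℝ))

lemma fbar_pow {k : ℕ} (hk : 1 ≤ k) {m α s : ℝ} (hα : 0 < α) (hs : 0 < s) :
    fbar k m α s ^ k = 1 + α * s ^ (-m) := by
  unfold fbar
  have h : 0 < s ^ (-m) := Real.rpow_pos_of_pos hs _
  rw [one_div, Real.rpow_inv_natCast_pow (by positivity) (by omega)]

lemma fbar_pos {k : ℕ} {m α s : ℝ} (hα : 0 < α) (hs : 0 < s) :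
    0 < fbar k m α s := by
  unfold fbar
  have h : 0 < s ^ (-m) := Real.rpow_pos_of_pos hs _
  positivity

lemma fbar_deriv {k : ℕ} (hk : 1 ≤ k) {m α s : ℝ} (hm : 1 < m) (hα : 0 < α) (hs : 0 < s) :
    ∃ f', HasDerivAt (fbar k m α) f' s ∧ f' < 0 ∧
      k * (f' * s * (1 + α * s ^ (-m))) = -(m * fbar k m α s * (α * s ^ (-m))) := by
  have h : 0 < s ^ (-m) := Real.rpow_pos_of_pos hs _
  have hb : 0 < 1 + α * s ^ (-m) := by positivity
  have hk' : (0:ℝ) < k := by exact_mod_cast hk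
  have h1 : HasDerivAt (fun s : ℝ => 1 + α * s ^ (-m)) (α * (-m * s ^ (-m - 1))) s :=
    ((Real.hasDerivAt_rpow_const (Or.inl hs.ne')).const_mul α).const_add 1
  have h2 := h1.rpow_const (p := 1 / (k:ℝ)) (Or.inl hb.ne')
  refine ⟨_, h2, ?_, ?_⟩
  · have p1 : 0 < s ^ (-m - 1) := Real.rpow_pos_of_pos hs _
    have p2 : 0 < (1 + α * s ^ (-m)) ^ (1 / (k:ℝ) - 1) := Real.rpow_pos_of_pos hb _
    have : 0 < α * (m * s ^ (-m - 1)) * (1 / (k:ℝ)) * (1 + α * s ^ (-m)) ^ (1 / (k:ℝ) - 1) := by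
      positivity
    linarith
  · unfold fbar
    have e1 : s ^ (-m - 1) * s = s ^ (-m) := by
      rw [← Real.rpow_add_one hs.ne']; congr 1; ring
    have e2 : (1 + α * s ^ (-m)) ^ (1 / (k:ℝ) - 1) * (1 + α * s ^ (-m))
        = (1 + α * s ^ (-m)) ^ (1 / (k:ℝ)) := by
      rw [← Real.rpow_add_one hb.ne']; congr 1; ring
    calc _ = (k * (1 / (k:ℝ))) * (-m * α) * (s ^ (-m - 1) * s) *
          ((1 + α * s ^ (-m)) ^ (1 / (k:ℝ) - 1) * (1 + α * s ^ (-m))) := by ring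
      _ = _ := by rw [e1, e2, mul_one_div_cancel hk'.ne']; ring

lemma barrier_G {k : ℕ} (hk : 1 ≤ k) {m : ℝ} (hm : 1 < m) {R : ℝ} (hR : 0 < R) (T : ℝ) :
    ∃ (α B : ℝ) (G : ℝ → ℝ), 0 < α ∧ G R = 0 ∧
      (∀ s, R / 2 < s → HasDerivAt G (fbar k m α s) s) ∧ T < G (2 * R) ∧
      ∀ s, R ≤ s → G s ≤ s + B := by
  set Y := |T| / R + 2 with hY
  have hY2 : 2 ≤ Y := by
    have : 0 ≤ |T| / R := by positivity
    linarith
  have hYk : 1 < Y ^ k := one_lt_pow₀ (by linarith) (by omega)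
  set α := (Y ^ k - 1) * (2 * R) ^ m with hα
  have hα0 : 0 < α := mul_pos (by linarith) (Real.rpow_pos_of_pos (by linarith) _)
  have hfY : fbar k m α (2 * R) = Y := by
    unfold fbar
    have : 1 + α * (2 * R) ^ (-m) = Y ^ k := by
      rw [hα, mul_assoc, ← Real.rpow_add (by linarith)]; simp
    rw [this, one_div, Real.pow_rpow_inv_natCast (by linarith) (by omega)]
  have hcont : Continuous (fun t : ℝ => fbar k m α (max t (R/2))) := by
    rw [continuous_iff_continuousAt]; intro t
    have hp : 0 < max t (R/2) := lt_max_of_lt_right (by linarith)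
    obtain ⟨f', hf', -⟩ := fbar_deriv hk hm hα0 hp
    exact ContinuousAt.comp (f := fun t : ℝ => max t (R/2)) hf'.continuousAt
      (by fun_prop)
  have hder : ∀ s, R / 2 < s →
      HasDerivAt (fun s => ∫ t in R..s, fbar k m α (max t (R/2))) (fbar k m α s) s := by
    intro s hs
    have := intervalIntegral.integral_hasDerivAt_right (hcont.intervalIntegrable R s)
      (hcont.stronglyMeasurableAtFilter _ _) hcont.continuousAt
    rwa [max_eq_left hs.le] at this
  set G := fun s => ∫ t in R..s, fbar k m α (max t (R/2)) with hG
  have hGR : G R = 0 := by simp [hG]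
  refine ⟨α, α * R ^ (1 - m) / (m - 1), G, hα0, hGR, hder, ?_, ?_⟩
  · obtain ⟨c, hc, hc2⟩ := exists_hasDerivAt_eq_slope G (fbar k m α) (show R < 2 * R by linarith)
      (fun x hx => (hder x (by linarith [hx.1])).continuousAt.continuousWithinAt)
      (fun x hx => hder x (by linarith [hx.1]))
    have hmono : Y ≤ fbar k m α c := by
      rw [← hfY]
      unfold fbar
      have hc0 : 0 < c := by linarith [hc.1]
      have p : (2 * R) ^ (-m) ≤ c ^ (-m) :=
        Real.rpow_le_rpow_of_nonpos hc0 hc.2.le (by linarith)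
      have p0 : 0 < (2 * R) ^ (-m) := Real.rpow_pos_of_pos (by linarith) _
      apply Real.rpow_le_rpow (by positivity) _ (by positivity)
      nlinarith
    rw [hc2, hGR, le_div_iff₀ (by linarith)] at hmono
    have : Y * (2 * R - R) = |T| + 2 * R := by rw [hY]; field_simp; ring
    rw [this] at hmono
    have := le_abs_self T
    linarith
  · intro s hs
    have hd : ∀ x, R ≤ x → HasDerivAt (fun s => G s - s + α * s ^ (1 - m) / (m - 1))
        (fbar k m α x - 1 - α * x ^ (-m)) x := by
      intro x hx
      have h1 := ((Real.hasDerivAt_rpow_const (p := 1 - m)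
        (Or.inl (show x ≠ 0 by linarith))).const_mul α).div_const (m - 1)
      have h2 := ((hder x (by linarith)).sub (hasDerivAt_id x)).add h1
      convert! h2 using 1
      have : (1 - m - 1) = -m := by ring
      rw [this]
      have : m - 1 ≠ 0 := by linarith
      field_simp
      ring
    have hanti : AntitoneOn (fun s => G s - s + α * s ^ (1 - m) / (m - 1)) (Set.Ici R) := by
      apply antitoneOn_of_deriv_nonpos (convex_Ici R)
      · intro x hx; exact (hd x hx).continuousAt.continuousWithinAt
      · intro x hx; rw [interior_Ici] at hx
        exact (hd x (le_of_lt hx)).differentiableAt.differentiableWithinAt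
      · intro x hx; rw [interior_Ici] at hx
        rw [(hd x (le_of_lt hx)).deriv]
        have hx0 : 0 < x := hR.trans hx
        have p0 : 0 < x ^ (-m) := Real.rpow_pos_of_pos hx0 _
        have : fbar k m α x ≤ (1 + α * x ^ (-m)) := by
          unfold fbar
          conv_rhs => rw [← Real.rpow_one (1 + α * x ^ (-m))]
          apply Real.rpow_le_rpow_of_exponent_le
          · nlinarith [mul_pos hα0 p0]
          · rw [div_le_one (by exact_mod_cast hk)]; exact_mod_cast hk
        linarith
    have := hanti (Set.mem_Ici.2 le_rfl) (Set.mem_Ici.2 hs) hs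
    simp only [hGR] at this
    have p0 : 0 < s ^ (1 - m) := Real.rpow_pos_of_pos (hR.trans_le hs) _
    have : 0 ≤ α * s ^ (1 - m) / (m - 1) := div_nonneg (by positivity) (by linarith)
    linarith

lemma no_touch {n k : ℕ} (hk1 : 1 ≤ k) (hkn : k ≤ n) {u w : Euc n → ℝ} {z : Euc n}
    {W : Matrix (Fin n) (Fin n) ℝ} (hu : ContDiffAt ℝ 2 u z) (hw : LineHess n w z W)
    (hW : W.IsSymm) (hG : ∀ j, 1 ≤ j → j ≤ k → 0 < matSk n j W) (h1 : 1 < matSk n k W)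
    (hS : SkHess n k u z = 1) : ¬ IsLocalMin (fun x => u x - w x) z := by
  intro hm
  have hP := touch (lineHess_smooth hu) hw (hess_symm hu) hW hm
  have := mono_psd k hk1 hkn W hW hG _ hP
  rw [add_sub_cancel] at this
  unfold SkHess at hS
  linarith

lemma compare {n : ℕ} (s w₁ w₂ u : Euc n → ℝ) (x₀ : Euc n) (ε R₀ R₁ r : ℝ)
    (hs : Continuous s) (hR : R₀ < R₁)
    (hu : ContinuousOn u (Metric.ball x₀ ε)ᶜ) (hw₁ : Continuous w₁)
    (hw₂ : ContinuousOn w₂ {x | R₀ ≤ s x})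
    (N₁ : ∀ z, s z < R₁ → z ∉ Metric.closedBall x₀ ε → ¬ IsLocalMin (fun x => u x - w₁ x) z)
    (N₂ : ∀ z, R₀ < s z → ¬ IsLocalMin (fun x => u x - w₂ x) z)
    (hsph : ∀ z ∈ Metric.sphere x₀ ε, u z = w₁ z)
    (h₀ : ∀ z, s z = R₀ → w₂ z < w₁ z) (h₁ : ∀ z, s z = R₁ → w₁ z < w₂ z)
    (hout : ∀ z, R₀ ≤ s z → z ∉ Metric.closedBall x₀ ε)
    (hinf : ∀ z, r < ‖z‖ → R₀ ≤ s z → w₂ z ≤ u z)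
    (hb : ∃ ρ, ∀ z, s z ≤ R₁ → ‖z‖ ≤ ρ) :
    ∀ x, x ∉ Metric.ball x₀ ε → s x ≤ R₁ → w₁ x ≤ u x := by
  intro x hx hxs
  by_contra hcon
  push Not at hcon
  obtain ⟨ρ, hρ⟩ := hb
  have hK1 : IsCompact ({x | s x ≤ R₁} ∩ (Metric.ball x₀ ε)ᶜ) := by
    apply (isCompact_closedBall (0 : Euc n) ρ).of_isClosed_subset
    · exact (isClosed_le hs continuous_const).inter Metric.isOpen_ball.isClosed_compl
    · rintro y ⟨hy, -⟩
      simpa using hρ y hy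
  obtain ⟨z, hz, hzm⟩ := hK1.exists_isMinOn ⟨x, hxs, hx⟩
    ((hu.mono Set.inter_subset_right).sub hw₁.continuousOn)
  rw [isMinOn_iff] at hzm
  have hzneg : u z - w₁ z < 0 := (hzm x ⟨hxs, hx⟩).trans_lt (by rw [Pi.sub_apply]; linarith)
  have nb : ∀ y, y ∉ Metric.closedBall x₀ ε → y ∉ Metric.ball x₀ ε :=
    fun y hy h => hy (Metric.ball_subset_closedBall h)
  have star : ∀ y, R₀ ≤ s y → u z - w₁ z ≤ u y - w₂ y := by
    intro y hy
    by_contra hc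
    push Not at hc
    have hK2 : IsCompact ({x | R₀ ≤ s x} ∩ Metric.closedBall 0 r) :=
      (isCompact_closedBall (0 : Euc n) r).inter_left (isClosed_le continuous_const hs)
    have hyr : ∀ y, R₀ ≤ s y → u y - w₂ y < 0 → y ∈ Metric.closedBall (0 : Euc n) r := by
      intro y hy hneg
      by_contra hn
      have := hinf y (by simpa using hn) hy
      linarith
    obtain ⟨p, hp, hpm⟩ := hK2.exists_isMinOn ⟨y, hy, hyr y hy (by linarith)⟩
      ((hu.mono (fun q hq => nb q (hout q hq.1))).sub (hw₂.mono Set.inter_subset_left))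
    rw [isMinOn_iff] at hpm
    have hpy : u p - w₂ p ≤ u y - w₂ y := hpm y ⟨hy, hyr y hy (by linarith)⟩
    have hpall : ∀ q, R₀ ≤ s q → u p - w₂ p ≤ u q - w₂ q := by
      intro q hq
      by_cases hneg : u q - w₂ q < 0
      · exact hpm q ⟨hq, hyr q hq hneg⟩
      · linarith
    have hps : R₀ ≤ s p := hp.1
    rcases hps.eq_or_lt with he | hlt
    · have h2 := h₀ p he.symm
      have h3 := hzm p ⟨by show s p ≤ R₁; linarith, nb p (hout p hps)⟩
      simp only [Pi.sub_apply] at h3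
      linarith
    · apply N₂ p hlt
      have : ∀ᶠ q in 𝓝 p, R₀ < s q := hs.continuousAt.eventually_const_lt hlt
      filter_upwards [this] with q hq
      exact hpall q hq.le
  have hz1 : s z ≤ R₁ := hz.1
  have hz2 : z ∉ Metric.ball x₀ ε := hz.2
  by_cases hzc : z ∈ Metric.closedBall x₀ ε
  · have : z ∈ Metric.sphere x₀ ε := by
      simp only [Metric.mem_closedBall, Metric.mem_ball, not_lt, Metric.mem_sphere] at *
      linarith
    have := hsph z this
    linarith
  rcases hz1.eq_or_lt with he | hlt
  · have h2 := h₁ z he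
    have h3 := star z (by linarith)
    linarith
  · apply N₁ z hlt hzc
    have e1 : ∀ᶠ q in 𝓝 z, s q < R₁ := hs.continuousAt.eventually_lt continuousAt_const hlt
    have e2 : ∀ᶠ q in 𝓝 z, q ∉ Metric.closedBall x₀ ε :=
      Metric.isClosed_closedBall.isOpen_compl.mem_nhds hzc
    filter_upwards [e1, e2] with q hq hq2
    exact hzm q ⟨hq.le, nb q hq2⟩

end helper3

lemma nosub_ball {n k : ℕ} (hk1 : 1 ≤ k) (hkn : k ≤ n) :
    ∃ C : ℝ, 0 < C ∧ (∀ j, 1 ≤ j → j ≤ k →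
      0 < matSk n j (Matrix.diagonal fun _ => 2 * C)) ∧
      1 < matSk n k (Matrix.diagonal fun _ => 2 * C) := by
  set E := Ec (fun _ : Fin n => (1:ℝ)) Finset.univ k with hE
  have hEp : 0 < E := Ec_pos _ (fun _ => one_pos) _ _ (by simpa using hkn)
  have hi : 0 < 1 / E := by positivity
  refine ⟨(1 + 1/E)/2, by positivity, ?_, ?_⟩
  · intro j hj hjk
    rw [matSk_diag _ _ (hjk.trans hkn)]
    exact Ec_pos _ (fun _ => by positivity) _ _ (by simpa using hjk.trans hkn)
  · rw [matSk_diag _ _ hkn]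
    have e : (fun _ : Fin n => 2 * ((1 + 1/E)/2)) = fun i => (1 + 1/E) * (fun _ : Fin n => (1:ℝ)) i := by
      funext i; simp; ring
    rw [e, Ec_smul, ← hE]
    have h1 : (1 + 1/E) ≤ (1+1/E)^k := le_self_pow₀ (by linarith) (by omega)
    have h2 : (1 + 1/E) * E = E + 1 := by field_simp
    nlinarith

lemma ext_touch {n k : ℕ} (hk1 : 1 ≤ k) (hkn : k ≤ n) (x₀ : Euc n) (ε : ℝ) (hε : 0 < ε)
    (u : Euc n → ℝ) (hsm : ∀ z ∈ (Metric.ball x₀ ε)ᶜ, ContDiffAt ℝ 2 u z)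
    (hK : KConvexOn n k u (Metric.closedBall x₀ ε)ᶜ)
    (hS : ∀ x ∈ (Metric.closedBall x₀ ε)ᶜ, SkHess n k u x = 1)
    (h0 : ∀ x ∈ Metric.sphere x₀ ε, u x = 0)
    (hpos : ∀ z ∈ Metric.sphere x₀ ε, ∀ᶠ x in 𝓝 z, x ∉ Metric.ball x₀ ε → 0 ≤ u x) :
    UpperSemicontinuous (extBy n (Metric.ball x₀ ε) 0 u) ∧
        ∀ (M : Matrix (Fin n) (Fin n) ℝ) (p : Euc n) (r : ℝ), M.IsSymm →
          (∃ z : Euc n, IsLocalMax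
            (fun x => extBy n (Metric.ball x₀ ε) 0 u x - (quadA n M x + linB n p x + r)) z) →
          0 ≤ matSk n k M := by
  constructor
  · intro z y hy
    by_cases hz : z ∈ Metric.ball x₀ ε
    · filter_upwards [Metric.isOpen_ball.mem_nhds hz] with x hx
      simpa [extBy, hx, hz] using hy
    · have huc := (hsm z hz).continuousAt
      have hy' : u z < y := by simpa only [extBy, if_neg hz] using hy
      by_cases hz2 : z ∈ Metric.closedBall x₀ ε
      · have hsp : z ∈ Metric.sphere x₀ ε := by
          simp only [Metric.mem_ball, not_lt, Metric.mem_closedBall, Metric.mem_sphere] at *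
          exact le_antisymm hz2 hz
        have hy0 : 0 < y := by rw [h0 z hsp] at hy'; exact hy'
        filter_upwards [huc.eventually_lt continuousAt_const hy'] with x hx
        simp only [extBy]; split_ifs <;> assumption
      · filter_upwards [huc.eventually_lt continuousAt_const hy',
          Metric.isClosed_closedBall.isOpen_compl.mem_nhds hz2] with x hx hx2
        have : x ∉ Metric.ball x₀ ε := fun h => hx2 (Metric.ball_subset_closedBall h)
        simpa only [extBy, if_neg this] using hx
  · rintro M p r hM ⟨z, hz⟩
    have key0 : (extBy n (Metric.ball x₀ ε) 0 u z = 0) →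
        (∀ᶠ x in 𝓝 z, 0 ≤ extBy n (Metric.ball x₀ ε) 0 u x) → 0 ≤ matSk n k M := by
      intro e0 ev
      have hm : IsLocalMin (fun x => (quadA n M x + linB n p x + r) - (fun _ => (0:ℝ)) x) z := by
        filter_upwards [hz, ev] with x hx1 hx2
        linarith
      have := touch (lineHess_poly M p z r) (lineHess_zero z) hM (by simp [Matrix.IsSymm]) hm
      rw [sub_zero] at this
      exact matSk_nonneg_of_psd k hkn M this
    by_cases hzb : z ∈ Metric.ball x₀ ε
    · refine key0 (by simp [extBy, hzb]) ?_
      filter_upwards [Metric.isOpen_ball.mem_nhds hzb] with x hx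
      simp [extBy, hx]
    · by_cases hz2 : z ∈ Metric.closedBall x₀ ε
      · have hsp : z ∈ Metric.sphere x₀ ε := by
          simp only [Metric.mem_ball, not_lt, Metric.mem_closedBall, Metric.mem_sphere] at *
          exact le_antisymm hz2 hzb
        refine key0 (by simp only [extBy, if_neg hzb]; exact h0 z hsp) ?_
        filter_upwards [hpos z hsp] with x hx
        simp only [extBy]
        split_ifs with h
        · exact le_rfl
        · exact hx h
      · have hm : IsLocalMin (fun x => (quadA n M x + linB n p x + r) - u x) z := by
          filter_upwards [hz, Metric.isClosed_closedBall.isOpen_compl.mem_nhds hz2] with x hx hx2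
          have : x ∉ Metric.ball x₀ ε := fun h => hx2 (Metric.ball_subset_closedBall h)
          simp only [extBy, if_neg this, if_neg hzb] at hx ⊢
          linarith
        have hc := hsm z hzb
        have hP := touch (lineHess_poly M p z r) (lineHess_smooth hc) hM (hess_symm hc) hm
        have hmono := mono_psd k hk1 hkn (hessMat n u z) (hess_symm hc) (hK z hz2) _ hP
        have h1 := hS z hz2
        unfold SkHess at h1
        rw [add_sub_cancel, h1] at hmono
        linarith

theorem statement13 (n k : ℕ) (hn : 3 ≤ n) (hk1 : 1 ≤ k) (hkn : k ≤ n)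
    (a : Fin n → ℝ) (hA : MemA n k (Matrix.diagonal a))
    (hk1' : k = 1 → (⨆ i, a i) < 1 / 2)
    (x₀ : Euc n) (hx₀ : x₀ ∈ Metric.ball (0 : Euc n) (1 / 2)) (hx₀' : x₀ ≠ 0) :
    ∃ cstar : ℝ, 0 < cstar ∧ ∀ c : ℝ, cstar ≤ c →
      ∀ ε : ℝ, 0 < ε → ε < 1 / 2 →
      ∀ u : Euc n → ℝ, ExtBallSol n k a x₀ ε c u →
        UpperSemicontinuous (extBy n (Metric.ball x₀ ε) 0 u) ∧
        ∀ (M : Matrix (Fin n) (Fin n) ℝ) (p : Euc n) (r : ℝ), M.IsSymm →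
          (∃ z : Euc n, IsLocalMax
            (fun x => extBy n (Metric.ball x₀ ε) 0 u x - (quadA n M x + linB n p x + r)) z) →
          0 ≤ matSk n k M := by
  obtain ⟨-, hpd, hSk⟩ := hA
  have ha : ∀ i, 0 < a i := Matrix.posDef_diagonal_iff.mp hpd
  have hS : Ec a Finset.univ k = 1 := by rw [← matSk_diag a k hkn]; exact hSk
  obtain ⟨m, hm, hmm⟩ := choose_m hn hk1 a ha hS
    (fun h i => (le_ciSup (Set.finite_range a).bddAbove i).trans_lt (hk1' h)) hkn
  have hnx : ‖x₀‖ < 1 / 2 := by simpa using hx₀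
  have : Nonempty (Fin n) := ⟨⟨0, by omega⟩⟩
  obtain ⟨i₀, hi₀⟩ := Finite.exists_min a
  set s : Euc n → ℝ := quadA n (Matrix.diagonal a) with hsdef
  set L := ∑ i, a i with hL
  have hLp : 0 < L := Finset.sum_pos (fun i _ => ha i) Finset.univ_nonempty
  have hnorm : ∀ z : Euc n, ‖z‖ ^ 2 = ∑ i, z i ^ 2 := fun z => by
    rw [EuclideanSpace.norm_sq_eq]; simp
  have hsup : ∀ z, 2 * s z ≤ L * ‖z‖ ^ 2 := by
    intro z
    rw [hsdef, quadA_diag, hnorm, hL, Finset.sum_mul]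
    have : ∑ i, a i * z i ^ 2 ≤ ∑ i, a i * ∑ j, z j ^ 2 := by
      refine Finset.sum_le_sum fun i _ => mul_le_mul_of_nonneg_left ?_ (ha i).le
      exact Finset.single_le_sum (f := fun j => z j ^ 2) (fun j _ => sq_nonneg _) (Finset.mem_univ i)
    linarith
  have hslow : ∀ z, a i₀ * ‖z‖ ^ 2 ≤ 2 * s z := by
    intro z
    rw [hsdef, quadA_diag, hnorm, Finset.mul_sum]
    have : ∑ i, a i₀ * z i ^ 2 ≤ ∑ i, a i * z i ^ 2 :=
      Finset.sum_le_sum fun i _ => mul_le_mul_of_nonneg_right (hi₀ i) (sq_nonneg _)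
    linarith
  have hδ := ha i₀
  set R₀ := L / 2 with hR₀
  have hR₀p : 0 < R₀ := by positivity
  set ρ := 2 * (2 * R₀) / a i₀ + 1 with hρ
  have hρp : 1 ≤ ρ := by
    have : 0 < 2 * (2 * R₀) / a i₀ := by positivity
    linarith
  have hb : ∀ z, s z ≤ 2 * R₀ → ‖z‖ ≤ ρ := by
    intro z hz
    by_contra hlt
    push Not at hlt
    have h1 := hslow z
    have h2 : a i₀ * ρ = 2 * (2 * R₀) + a i₀ := by rw [hρ]; field_simp
    have h3 : ρ ≤ ‖z‖ ^ 2 := by nlinarith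
    nlinarith
  obtain ⟨C, hC, hC1, hC2⟩ := nosub_ball hk1 hkn
  obtain ⟨α, B, G, hα, hGR, hGd, hGT, hGB⟩ := barrier_G hk1 hm hR₀p (C * (ρ + 1/2) ^ 2)
  refine ⟨max (B + 1) 1, lt_max_of_lt_right one_pos, ?_⟩
  intro c hc ε hε hε2 u hu
  obtain ⟨⟨U, hUo, hUs, hUd⟩, hK, hS1, h0, hlim⟩ := hu
  rw [closure_ball x₀ hε.ne'] at hK hS1
  have hsm : ∀ z ∈ (Metric.ball x₀ ε)ᶜ, ContDiffAt ℝ 2 u z := fun z hz =>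
    (hUd.contDiffAt (hUo.mem_nhds (hUs hz))).of_le (WithTop.coe_le_coe.mpr (le_top : (2:ℕ∞) ≤ ⊤))
  have hcB : B + 1 ≤ c := (le_max_left _ _).trans hc
  have hscont : Continuous s := by
    rw [hsdef]; unfold quadA; fun_prop
  have hout : ∀ z, R₀ ≤ s z → z ∉ Metric.closedBall x₀ ε := by
    intro z hz hzb
    rw [Metric.mem_closedBall, dist_eq_norm] at hzb
    have h1 : ‖z‖ < 1 := by
      have : ‖z‖ ≤ ‖z - x₀‖ + ‖x₀‖ := by simpa using norm_add_le (z - x₀) x₀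
      linarith
    have h2 := hsup z
    have h3 : ‖z‖ ^ 2 < 1 := by
      have := norm_nonneg z
      nlinarith
    nlinarith
  obtain ⟨r, hr⟩ : ∃ r, ∀ z : Euc n, r < ‖z‖ → s z + c - 1 ≤ u z := by
    have ev : ∀ᶠ x in cocompact (Euc n), -1 < u x - (s x + c) :=
      hlim.eventually (lt_mem_nhds (by norm_num))
    obtain ⟨K, hKc, hKs⟩ := Filter.mem_cocompact.mp ev
    obtain ⟨r, hr⟩ := hKc.isBounded.subset_closedBall 0
    refine ⟨r, fun z hz => ?_⟩
    have : z ∈ Kᶜ := fun h => by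
      have := hr h
      rw [mem_closedBall_zero_iff] at this
      linarith
    have := hKs this
    simp only [Set.mem_ofPred_eq] at this
    linarith
  have hcomp := compare s (fun x => C * (‖x - x₀‖ ^ 2 - ε ^ 2)) (fun x => G (s x)) u x₀ ε R₀
    (2 * R₀) r hscont (by linarith) (fun z hz => (hsm z hz).continuousAt.continuousWithinAt)
    (by fun_prop)
    (fun z hz => by
      have hz' : R₀ ≤ s z := hz
      exact ((hGd (s z) (by linarith)).continuousAt.comp hscont.continuousAt).continuousWithinAt)
    (fun z _ hzb => no_touch hk1 hkn
      (hsm z fun h => hzb (Metric.ball_subset_closedBall h))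
      (lineHess_ball x₀ z C ε) (Matrix.isSymm_diagonal _) hC1 hC2 (hS1 z hzb))
    (fun z hz => by
      have hzb := hout z hz.le
      have hsz : 0 < s z := hR₀p.trans hz
      obtain ⟨f', hf', hneg, hrel⟩ := fbar_deriv hk1 hm hα hsz
      obtain ⟨b1, b2⟩ := barrier_alg hk1 hkn a ha hS m hm hmm z (fbar k m α (s z)) f'
        (α * (s z) ^ (-m)) hsz (fbar_pos hα hsz) hneg (by positivity) hrel
        (fbar_pow hk1 hα hsz)
      refine no_touch hk1 hkn (hsm z fun h => hzb (Metric.ball_subset_closedBall h))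
        (lineHess_G a z G (fbar k m α) f' ?_ hf') ?_ b1 b2 (hS1 z hzb)
      · filter_upwards [lt_mem_nhds (show R₀ / 2 < s z by linarith)] with t ht
        exact hGd t ht
      · refine (Matrix.isSymm_diagonal _).add (Matrix.IsSymm.smul ?_ _)
        ext i j
        simp [Matrix.vecMulVec_apply, mul_comm])
    (fun z hz => by
      rw [h0 z hz]
      rw [mem_sphere_iff_norm] at hz
      simp [hz])
    (fun z hz => by
      have := hout z hz.ge
      rw [Metric.mem_closedBall, dist_eq_norm, not_le] at this
      simp only [hz, hGR]
      have : ε ^ 2 < ‖z - x₀‖ ^ 2 := by nlinarith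
      exact mul_pos hC (by linarith))
    (fun z hz => by
      have h1 := hb z hz.le
      have h2 : ‖z - x₀‖ ≤ ρ + 1 / 2 := (norm_sub_le _ _).trans (by linarith)
      simp only [hz]
      refine lt_of_le_of_lt ?_ hGT
      refine mul_le_mul_of_nonneg_left ?_ hC.le
      have := norm_nonneg (z - x₀)
      nlinarith [sq_nonneg ε])
    hout
    (fun z hz hz2 => by
      have h1 := hr z hz
      have h2 := hGB (s z) hz2
      linarith)
    ⟨ρ, hb⟩
  refine ext_touch hk1 hkn x₀ ε hε u hsm hK hS1 h0 ?_
  intro z hz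
  have hsz : s z < R₀ := by
    by_contra h
    exact hout z (not_lt.mp h) (Metric.sphere_subset_closedBall hz)
  have hev : ∀ᶠ x in 𝓝 z, s x < R₀ := hscont.continuousAt.eventually_lt continuousAt_const hsz
  filter_upwards [hev] with x hx hxb
  refine le_trans ?_ (hcomp x hxb (by linarith))
  rw [Metric.mem_ball, dist_eq_norm, not_lt] at hxb
  have : ε ^ 2 ≤ ‖x - x₀‖ ^ 2 := by nlinarith
  exact mul_nonneg hC.le (by linarith)
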